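/- arXiv:1907.06761 — 2 statements merged into one kernel-verified Lean document; each statement's English description precedes it below -/
import Mathlib

section
/- Suppose n is even. Then for all integers i, j with 0 ≤ j ≤ i < n/2, the following identity holds in A: O(n−i, i)·O(n−j, j) = (−1)^{ij} O(2n−i−j, i+j) + (−1)^{i(j+1)} λ^i O(n+i−j, n−i+j). Consequently, any two orbit sums of degree n commute: O(n−i, i)·O(n−j, j) = O(n−j, j)·O(n−i, i) for all 0 ≤ i, j ≤ n/2. -/
/-!
Setting: `lam n = exp(2πi/n)` is a primitive `n`-th root of unity in `ℂ`.
`SkewAlg` is the `(-1)`-skew polynomial ring `A = ℂ⟨u,v⟩/(uv+vu)`, with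
generators `uGen`, `vGen`.  The automorphism `g` (of order `2n`) is determined
by `g u = v`, `g v = lam n • u`, and generates the cyclic group `G`, so that
the fixed subring `A^G` is `{a | g a = a}`.  The orbit sum is
`orbitSum n a b = u^a v^b + (-1)^(a*b) * (lam n)^b • (u^b v^a)`.
-/

noncomputable section

/-- `lam n = exp(2πi/n)`, a primitive `n`-th root of unity. -/
def lam (n : ℕ) : ℂ := Complex.exp (2 * (Real.pi : ℂ) * Complex.I / (n : ℂ))

/-- The defining relation of the `(-1)`-skew polynomial ring: `uv + vu = 0`. -/
inductive SkewRel : FreeAlgebra ℂ (Fin 2) → FreeAlgebra ℂ (Fin 2) → Prop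
  | rel : SkewRel (FreeAlgebra.ι ℂ 0 * FreeAlgebra.ι ℂ 1 + FreeAlgebra.ι ℂ 1 * FreeAlgebra.ι ℂ 0) 0

/-- The skew polynomial ring `A = ℂ⟨u,v⟩/(uv+vu)`. -/
abbrev SkewAlg : Type := RingQuot SkewRel

/-- The generator `u` of `A`. -/
def uGen : SkewAlg := RingQuot.mkAlgHom ℂ SkewRel (FreeAlgebra.ι ℂ 0)

/-- The generator `v` of `A`. -/
def vGen : SkewAlg := RingQuot.mkAlgHom ℂ SkewRel (FreeAlgebra.ι ℂ 1)

/-- Orbit sum `O(a,b) = u^a v^b + (-1)^(ab) λ^b u^b v^a`. -/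
def orbitSum (n a b : ℕ) : SkewAlg :=
  uGen ^ a * vGen ^ b + ((-1 : ℂ) ^ (a * b) * lam n ^ b) • (uGen ^ b * vGen ^ a)

theorem vu_rel : vGen * uGen = (-1 : ℂ) • (uGen * vGen) := by
  have h := RingQuot.mkAlgHom_rel ℂ SkewRel.rel
  rw [map_add, map_mul, map_mul, map_zero] at h
  change uGen * vGen + vGen * uGen = 0 at h
  have h0 : (-1 : ℂ) • (uGen * vGen) + uGen * vGen = 0 := by
    have h1 : ((-1 : ℂ) + 1) • (uGen * vGen) = 0 := by
      rw [neg_add_cancel, zero_smul]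
    rwa [add_smul, one_smul] at h1
  calc vGen * uGen = ((-1 : ℂ) • (uGen * vGen) + uGen * vGen) + vGen * uGen := by
        rw [h0, zero_add]
    _ = (-1 : ℂ) • (uGen * vGen) := by rw [add_assoc, h, add_zero]

theorem v_upow (a : ℕ) : vGen * uGen ^ a = ((-1 : ℂ) ^ a) • (uGen ^ a * vGen) := by
  induction a with
  | zero => simp
  | succ a ih =>
    rw [pow_succ, ← mul_assoc, ih, smul_mul_assoc, mul_assoc, vu_rel, pow_succ (-1 : ℂ), mul_smul,
      mul_smul_comm]
    congr 1
    rw [mul_assoc]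

theorem vpow_upow (a b : ℕ) :
    vGen ^ b * uGen ^ a = ((-1 : ℂ) ^ (a * b)) • (uGen ^ a * vGen ^ b) := by
  induction b with
  | zero => simp
  | succ b ih =>
    rw [pow_succ, mul_assoc, v_upow, mul_smul_comm, ← mul_assoc, ih, smul_mul_assoc, smul_smul,
      mul_assoc, ← pow_add]
    congr 2
    ring

theorem mono_mul (a b c d : ℕ) :
    (uGen ^ a * vGen ^ b) * (uGen ^ c * vGen ^ d) =
      ((-1 : ℂ) ^ (b * c)) • (uGen ^ (a + c) * vGen ^ (b + d)) := by
  rw [mul_assoc, ← mul_assoc (vGen ^ b), vpow_upow, smul_mul_assoc, mul_smul_comm, mul_comm c b,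
    pow_add, pow_add]
  simp only [mul_assoc]

theorem lam_pow (n : ℕ) (hn : 0 < n) : lam n ^ n = 1 :=
  (Complex.isPrimitiveRoot_exp n hn.ne').pow_eq_one

theorem sign_eq {a b : ℕ} (h : Even (a + b)) : (-1 : ℂ) ^ a = (-1) ^ b := by
  rcases Nat.even_or_odd a with ha | ha
  · rw [ha.neg_one_pow, ((Nat.even_add.1 h).1 ha).neg_one_pow]
  · have hb : Odd b := by
      rw [← Nat.not_even_iff_odd] at ha ⊢
      exact fun hb => ha ((Nat.even_add.1 h).2 hb)
    rw [ha.neg_one_pow, hb.neg_one_pow]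

theorem expand (n i j k l : ℕ) (hne : Even n) (hk : k + i = n) (hl : l + j = n) :
    orbitSum n k i * orbitSum n l j =
      ((-1 : ℂ) ^ (i * j)) • (uGen ^ (k + l) * vGen ^ (i + j)) +
      ((-1 : ℂ) ^ (i * j + j) * lam n ^ j) • (uGen ^ (k + j) * vGen ^ (i + l)) +
      ((-1 : ℂ) ^ (i * j + i) * lam n ^ i) • (uGen ^ (i + l) * vGen ^ (k + j)) +
      ((-1 : ℂ) ^ (i * j + i + j) * lam n ^ (i + j)) • (uGen ^ (i + j) * vGen ^ (k + l)) := by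
  have hk' : Even (k + i) := hk ▸ hne
  have hl' : Even (l + j) := hl ▸ hne
  have e1 : (-1 : ℂ) ^ (i * l) = (-1) ^ (i * j) := sign_eq (by grind)
  have e2 : (-1 : ℂ) ^ (l * j) = (-1) ^ j := sign_eq (by grind)
  have e3 : (-1 : ℂ) ^ (k * i) = (-1) ^ i := sign_eq (by grind)
  have e4 : (-1 : ℂ) ^ (k * l) = (-1) ^ (i * j) := sign_eq (by grind)
  have e5 : (-1 : ℂ) ^ (k * j) = (-1) ^ (i * j) := sign_eq (by grind)
  unfold orbitSum
  simp only [mul_add, add_mul, smul_mul_assoc, mul_smul_comm, mono_mul, smul_smul, e1, e2, e3, e4,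
    e5, pow_add (-1 : ℂ), pow_add (lam n)]
  module

/-- For `n` even and `0 ≤ j ≤ i < n/2`,
`O(n-i,i) O(n-j,j) = (-1)^(ij) O(2n-i-j, i+j) + (-1)^(i(j+1)) λ^i O(n+i-j, n-i+j)`;
consequently any two orbit sums of degree `n` commute. -/
theorem orbitSum_deg_n_mul (n : ℕ) (hn : 0 < n) (hne : Even n) :
    (∀ i j : ℕ, j ≤ i → i < n / 2 →
      orbitSum n (n - i) i * orbitSum n (n - j) j =
        ((-1 : ℂ) ^ (i * j)) • orbitSum n (2 * n - i - j) (i + j) +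
          ((-1 : ℂ) ^ (i * (j + 1)) * lam n ^ i) • orbitSum n (n + i - j) (n - i + j)) ∧
    (∀ i j : ℕ, i ≤ n / 2 → j ≤ n / 2 →
      orbitSum n (n - i) i * orbitSum n (n - j) j =
        orbitSum n (n - j) j * orbitSum n (n - i) i) := by
  constructor
  · intro i j hji hi
    have h1 : 2 * n - i - j = (n - i) + (n - j) := by omega
    have h2 : n + i - j = i + (n - j) := by omega
    rw [expand n i j (n - i) (n - j) hne (by omega) (by omega), h1, h2]
    have e1 : (-1 : ℂ) ^ ((n - i + (n - j)) * (i + j)) = (-1) ^ (i + j) := by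
      obtain ⟨k, hk⟩ : ∃ k, k = n - i := ⟨_, rfl⟩
      obtain ⟨l, hl⟩ : ∃ l, l = n - j := ⟨_, rfl⟩
      have hk' : Even (k + i) := by rwa [show k + i = n by omega]
      have hl' : Even (l + j) := by rwa [show l + j = n by omega]
      rw [← hk, ← hl]
      exact sign_eq (by grind)
    have e2 : (-1 : ℂ) ^ ((i + (n - j)) * (n - i + j)) = (-1) ^ (i + j) := by
      obtain ⟨k, hk⟩ : ∃ k, k = n - i := ⟨_, rfl⟩
      obtain ⟨l, hl⟩ : ∃ l, l = n - j := ⟨_, rfl⟩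
      have hk' : Even (k + i) := by rwa [show k + i = n by omega]
      have hl' : Even (l + j) := by rwa [show l + j = n by omega]
      rw [← hk, ← hl]
      exact sign_eq (by grind)
    have e3 : lam n ^ i * lam n ^ (n - i + j) = lam n ^ j := by
      rw [← pow_add, show i + (n - i + j) = n + j by omega, pow_add, lam_pow n hn, one_mul]
    have e4 : (-1 : ℂ) ^ i * (-1) ^ i = 1 := by
      rw [← mul_pow]; simp
    have e5 : ((-1 : ℂ) ^ (i * (j + 1)) * lam n ^ i) * ((-1) ^ (i + j) * lam n ^ (n - i + j)) =
        (-1 : ℂ) ^ (i * j + j) * lam n ^ j := by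
      rw [← e3, mul_add, mul_one, pow_add, pow_add, pow_add (-1 : ℂ) (i * j) j]
      linear_combination ((-1 : ℂ) ^ (i * j) * (-1) ^ j * lam n ^ i * lam n ^ (n - i + j)) * e4
    unfold orbitSum
    rw [e1, e2, smul_add, smul_add, smul_smul, smul_smul, e5, mul_add i j 1, mul_one, add_assoc (i * j),
      pow_add (-1 : ℂ) (i * j) (i + j)]
    module
  · intro i j hi hj
    rw [expand n i j (n - i) (n - j) hne (by omega) (by omega),
      expand n j i (n - j) (n - i) hne (by omega) (by omega),
      mul_comm j i, add_comm j i, add_comm (n - j) (n - i), add_comm (n - j) i,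
      add_comm j (n - i), add_right_comm (i * j) j i]
    abel
end
end

section
/- Suppose n is odd. Then the fixed subring A^G is strictly larger than the ℂ-subalgebra of A generated by the orbit sums of degrees n and 2n: A^G ≠ the ℂ-subalgebra generated by {O(n−i, i) : 0 ≤ i ≤ (n−1)/2} ∪ {O(2n−i, i) : 0 ≤ i ≤ n}. (This is the lower bound β(g) ≥ 3n > |G| = 2n, so the Noether bound fails for this action.) -/
/-!
Setting: `lam n = exp(2πi/n)` is a primitive `n`-th root of unity in `ℂ`.
`SkewAlg` is the `(-1)`-skew polynomial ring `A = ℂ⟨u,v⟩/(uv+vu)`, with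
generators `uGen`, `vGen`.  The automorphism `g` (of order `2n`) is determined
by `g u = v`, `g v = lam n • u`, and generates the cyclic group `G`, so that
the fixed subring `A^G` is `{a | g a = a}`.  The orbit sum is
`orbitSum n a b = u^a v^b + (-1)^(a*b) * (lam n)^b • (u^b v^a)`.
-/

noncomputable section

open Matrix in
/-- The image of `u` in the two-dimensional representation. -/
def repU : Matrix (Fin 2) (Fin 2) ℂ := !![1, 0; 0, -1]

open Matrix in
/-- The image of `v` in the two-dimensional representation. -/
def repV (n : ℕ) : Matrix (Fin 2) (Fin 2) ℂ := !![0, -lam n; 1, 0]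

lemma lam_pow_self (n : ℕ) (hn : n ≠ 0) : lam n ^ n = 1 :=
  (Complex.isPrimitiveRoot_exp n hn).pow_eq_one

lemma repU_sq : repU ^ 2 = 1 := by
  rw [pow_two, repU]
  ext i j; fin_cases i <;> fin_cases j <;> simp [Matrix.mul_apply, Fin.sum_univ_two]

lemma repV_sq (n : ℕ) : repV n ^ 2 = (-lam n) • (1 : Matrix (Fin 2) (Fin 2) ℂ) := by
  rw [pow_two, repV]
  ext i j; fin_cases i <;> fin_cases j <;> simp [Matrix.mul_apply, Fin.sum_univ_two]

lemma rep_anticomm (n : ℕ) : repU * repV n + repV n * repU = 0 := by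
  rw [repU, repV]
  ext i j; fin_cases i <;> fin_cases j <;> simp

/-- The two-dimensional representation, in which `v ^ 2 = - lam n * u ^ 2`. -/
def rep (n : ℕ) : SkewAlg →ₐ[ℂ] Matrix (Fin 2) (Fin 2) ℂ :=
  RingQuot.liftAlgHom ℂ ⟨FreeAlgebra.lift ℂ ![repU, repV n], by
    intro x y h
    cases h
    simpa using rep_anticomm n⟩

lemma rep_u (n : ℕ) : rep n uGen = repU := by
  simp [rep, uGen]

lemma rep_v (n : ℕ) : rep n vGen = repV n := by
  simp [rep, vGen]

lemma repU_even (j : ℕ) : repU ^ (2 * j) = 1 := by rw [pow_mul, repU_sq, one_pow]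

lemma repU_odd (j : ℕ) : repU ^ (2 * j + 1) = repU := by rw [pow_succ, repU_even, one_mul]

lemma repV_even (n j : ℕ) :
    repV n ^ (2 * j) = ((-lam n) ^ j) • (1 : Matrix (Fin 2) (Fin 2) ℂ) := by
  rw [pow_mul, repV_sq, smul_pow, one_pow]

lemma repV_odd (n j : ℕ) : repV n ^ (2 * j + 1) = ((-lam n) ^ j) • repV n := by
  rw [pow_succ, repV_even, smul_mul_assoc, one_mul]

lemma rep_orbitSum (n a b : ℕ) : rep n (orbitSum n a b) =
    repU ^ a * repV n ^ b + ((-1 : ℂ) ^ (a * b) * lam n ^ b) • (repU ^ b * repV n ^ a) := by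
  simp [orbitSum, rep_u, rep_v]

lemma neg_lam_pow (k : ℕ) : (-lam (2 * k + 1)) ^ (2 * k + 1) = -1 := by
  rw [Odd.neg_pow ⟨k, rfl⟩, lam_pow_self _ (by omega)]

lemma rep_deg_n (k i : ℕ) (hi : i ≤ k) : ∃ α : ℂ,
    rep (2 * k + 1) (orbitSum (2 * k + 1) (2 * k + 1 - i) i) =
      α • (repU + ((-lam (2 * k + 1)) ^ k) • repV (2 * k + 1)) := by
  have hμ := neg_lam_pow k
  rw [rep_orbitSum]
  obtain ⟨j, rfl | rfl⟩ := Nat.even_or_odd' i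
  · obtain ⟨m, rfl⟩ : ∃ m, k = m + j := ⟨k - j, by omega⟩
    have h1 : 2 * (m + j) + 1 - 2 * j = 2 * m + 1 := by omega
    rw [h1, repU_odd, repU_even, repV_even, repV_odd]
    generalize lam (2 * (m + j) + 1) = L at *
    refine ⟨(-L) ^ j, ?_⟩
    have h2 : (-1 : ℂ) ^ ((2 * m + 1) * (2 * j)) = 1 := Even.neg_one_pow ⟨(2 * m + 1) * j, by ring⟩
    have h3 : L ^ (2 * j) = (-L) ^ (2 * j) := by rw [Even.neg_pow ⟨j, by ring⟩]
    rw [h2, h3, mul_smul_comm, mul_one, one_mul, one_mul, smul_smul, smul_add, smul_smul]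
    congr 2
    ring
  · obtain ⟨m, rfl⟩ : ∃ m, k = m + j := ⟨k - j, by omega⟩
    have h1 : 2 * (m + j) + 1 - (2 * j + 1) = 2 * m := by omega
    rw [h1, repU_odd, repU_even, repV_even, repV_odd]
    generalize lam (2 * (m + j) + 1) = L at *
    refine ⟨-(-L) ^ (m + 2 * j + 1), ?_⟩
    have h2 : (-1 : ℂ) ^ ((2 * m) * (2 * j + 1)) = 1 := Even.neg_one_pow ⟨m * (2 * j + 1), by ring⟩
    have h3 : L ^ (2 * j + 1) = -(-L) ^ (2 * j + 1) := by rw [Odd.neg_pow ⟨j, by ring⟩, neg_neg]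
    rw [h2, h3, mul_smul_comm, mul_smul_comm, mul_one, one_mul, one_mul, smul_smul, smul_add, smul_smul, add_comm]
    congr 2
    · ring
    · linear_combination ((-L) ^ j) * hμ

lemma rep_deg_two_n (k i : ℕ) (hi : i ≤ 2 * k + 1) :
    rep (2 * k + 1) (orbitSum (2 * k + 1) (2 * (2 * k + 1) - i) i) = 0 := by
  have hμ := neg_lam_pow k
  rw [rep_orbitSum]
  generalize hn : 2 * k + 1 = n at *
  obtain ⟨j, rfl | rfl⟩ := Nat.even_or_odd' i
  · obtain ⟨m, rfl⟩ : ∃ m, n = m + j := ⟨n - j, by omega⟩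
    have h1 : 2 * (m + j) - 2 * j = 2 * m := by omega
    rw [h1, repU_even, repU_even, repV_even, repV_even]
    generalize lam (m + j) = L at *
    have h2 : (-1 : ℂ) ^ ((2 * m) * (2 * j)) = 1 := Even.neg_one_pow ⟨(2 * m) * j, by ring⟩
    have h3 : L ^ (2 * j) = (-L) ^ (2 * j) := by rw [Even.neg_pow ⟨j, by ring⟩]
    rw [h2, h3, one_mul, one_mul, one_mul, smul_smul, ← add_smul]
    convert zero_smul ℂ _
    linear_combination ((-L) ^ j) * hμ
  · obtain ⟨m, rfl⟩ : ∃ m, n = m + j + 1 := ⟨n - j - 1, by omega⟩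
    have h1 : 2 * (m + j + 1) - (2 * j + 1) = 2 * m + 1 := by omega
    rw [h1, repU_odd, repU_odd, repV_odd, repV_odd]
    generalize lam (m + j + 1) = L at *
    have h2 : (-1 : ℂ) ^ ((2 * m + 1) * (2 * j + 1)) = -1 :=
      Odd.neg_one_pow (Odd.mul ⟨m, rfl⟩ ⟨j, rfl⟩)
    have h3 : L ^ (2 * j + 1) = -(-L) ^ (2 * j + 1) := by rw [Odd.neg_pow ⟨j, by ring⟩, neg_neg]
    rw [h2, h3, mul_smul_comm, mul_smul_comm, smul_smul, ← add_smul]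
    convert zero_smul ℂ _
    linear_combination ((-L) ^ j) * hμ

/-- If `n` is odd then the fixed subring `A^G` is strictly larger than the
`ℂ`-subalgebra generated by the orbit sums of degrees `n` and `2n` (the Noether
bound fails). -/
theorem fixed_ne_adjoin_of_odd (n : ℕ) (hodd : Odd n)
    (g : SkewAlg ≃ₐ[ℂ] SkewAlg) (hgu : g uGen = vGen) (hgv : g vGen = lam n • uGen) :
    {a : SkewAlg | g a = a} ≠
      ↑(Algebra.adjoin ℂ
        ({x : SkewAlg | ∃ i : ℕ, i ≤ (n - 1) / 2 ∧ x = orbitSum n (n - i) i} ∪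
         {x : SkewAlg | ∃ i : ℕ, i ≤ n ∧ x = orbitSum n (2 * n - i) i})) := by
  intro hEq
  obtain ⟨k, rfl⟩ := hodd
  have hL := lam_pow_self (2 * k + 1) (by omega)
  have hμ := neg_lam_pow k
  set W := repU + ((-lam (2 * k + 1)) ^ k) • repV (2 * k + 1) with hW
  have hle : Algebra.adjoin ℂ
        ({x : SkewAlg | ∃ i : ℕ, i ≤ (2 * k + 1 - 1) / 2 ∧
            x = orbitSum (2 * k + 1) (2 * k + 1 - i) i} ∪
         {x : SkewAlg | ∃ i : ℕ, i ≤ 2 * k + 1 ∧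
            x = orbitSum (2 * k + 1) (2 * (2 * k + 1) - i) i}) ≤
      (Subalgebra.centralizer ℂ {W}).comap (rep (2 * k + 1)) := by
    refine Algebra.adjoin_le ?_
    rintro x (⟨i, hi, rfl⟩ | ⟨i, hi, rfl⟩)
    · obtain ⟨α, hα⟩ := rep_deg_n k i (by omega)
      simp only [SetLike.mem_coe, Subalgebra.mem_comap, Subalgebra.mem_centralizer_iff,
        Set.mem_singleton_iff, forall_eq]
      rw [hα, ← hW, mul_smul_comm, smul_mul_assoc]
    · simp only [SetLike.mem_coe, Subalgebra.mem_comap, Subalgebra.mem_centralizer_iff,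
        Set.mem_singleton_iff, forall_eq]
      rw [rep_deg_two_n k i hi, mul_zero, zero_mul]
  have hfix : uGen ^ (3 * (2 * k + 1)) + vGen ^ (3 * (2 * k + 1)) ∈ {a : SkewAlg | g a = a} := by
    have h3 : lam (2 * k + 1) ^ (3 * (2 * k + 1)) = 1 := by
      rw [mul_comm 3 (2 * k + 1), pow_mul, hL, one_pow]
    simp only [Set.mem_ofPred_eq, map_add, map_pow, hgu, hgv]
    rw [smul_pow, h3, one_smul, add_comm]
  rw [hEq] at hfix
  have h := hle hfix
  simp only [Subalgebra.mem_comap, Subalgebra.mem_centralizer_iff,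
    Set.mem_singleton_iff, forall_eq, map_add, map_pow, rep_u, rep_v] at h
  have e1 : 3 * (2 * k + 1) = 2 * (3 * k + 1) + 1 := by ring
  have e2 : (-lam (2 * k + 1)) ^ (3 * k + 1) = -(-lam (2 * k + 1)) ^ k := by
    linear_combination ((-lam (2 * k + 1)) ^ k) * hμ
  rw [e1, repU_odd, repV_odd, e2, hW] at h
  have h10 := congrFun (congrFun h 1) 0
  simp [repU, repV, Matrix.mul_apply, Fin.sum_univ_two] at h10
  have hne : (-lam (2 * k + 1)) ^ k ≠ 0 := by
    apply pow_ne_zero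
    intro h0
    rw [h0, zero_pow (by omega)] at hμ
    norm_num at hμ
  apply hne
  linear_combination (1 / 4) * h10
end
end
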